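/- Let K be a number field with ring of integers 𝓞, and let H(𝓞) be the Heisenberg group over 𝓞. Then for every n ∈ ℕ with n ≥ 1, the number of twist-equivalence classes of n-dimensional irreducible complex representations of H(𝓞) equals the sum, over all nonzero ideals I of 𝓞 of absolute norm n, of the cardinality of the unit group of 𝓞/I: r̃ₙ(H(𝓞)) = ∑_{I ⊴ 𝓞, |𝓞/I| = n} |(𝓞/I)ˣ|. Equivalently, ζ^{~irr}_{H(𝓞)}(s) = ζ_K(s−1)/ζ_K(s), where ζ_K is the Dedekind zeta function of K. -/

import Mathlib

/-- The Heisenberg group over a commutative ring `R`: the group of upper unitriangular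
`3 × 3` matrices `![![1, x, z], ![0, 1, y], ![0, 0, 1]]` with entries in `R`,
encoded by the entry triple `(x, y, z)` with the matrix multiplication law. -/
@[ext]
structure Heisenberg (R : Type*) [CommRing R] where
  x : R
  y : R
  z : R

namespace Heisenberg

variable {R : Type*} [CommRing R]

instance : Mul (Heisenberg R) :=
  ⟨fun a b => ⟨a.x + b.x, a.y + b.y, a.z + b.z + a.x * b.y⟩⟩

instance : One (Heisenberg R) := ⟨⟨0, 0, 0⟩⟩

instance : Inv (Heisenberg R) :=
  ⟨fun a => ⟨-a.x, -a.y, a.x * a.y - a.z⟩⟩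

lemma mul_def (a b : Heisenberg R) :
    a * b = ⟨a.x + b.x, a.y + b.y, a.z + b.z + a.x * b.y⟩ := rfl

lemma one_def : (1 : Heisenberg R) = ⟨0, 0, 0⟩ := rfl

lemma inv_def (a : Heisenberg R) : a⁻¹ = ⟨-a.x, -a.y, a.x * a.y - a.z⟩ := rfl

instance : Group (Heisenberg R) where
  mul_assoc a b c := by
    simp only [mul_def, mk.injEq]
    refine ⟨by ring, by ring, by ring⟩
  one_mul a := by ext <;> simp [mul_def, one_def]
  mul_one a := by ext <;> simp [mul_def, one_def]
  inv_mul_cancel a := by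
    simp only [mul_def, inv_def, one_def, mk.injEq]
    refine ⟨by ring, by ring, by ring⟩

end Heisenberg

open scoped MatrixGroups

/-- A submodule `W` of `ℂ^n` is invariant under a matrix representation `ρ` if it is stable
under the action of every `ρ g`. -/
def RepInvariant {G : Type*} [Group G] {n : ℕ} (ρ : G →* GL (Fin n) ℂ)
    (W : Submodule ℂ (Fin n → ℂ)) : Prop :=
  ∀ g : G, ∀ v ∈ W, Matrix.mulVec (ρ g : Matrix (Fin n) (Fin n) ℂ) v ∈ W

/-- A matrix representation `ρ : G →* GLₙ(ℂ)` is irreducible if the associated `ℂG`-module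
`ℂ^n` is simple, i.e. nonzero and without proper nonzero invariant submodules. -/
def RepIsIrreducible {G : Type*} [Group G] {n : ℕ} (ρ : G →* GL (Fin n) ℂ) : Prop :=
  (⊥ : Submodule ℂ (Fin n → ℂ)) ≠ ⊤ ∧
    ∀ W : Submodule ℂ (Fin n → ℂ), RepInvariant ρ W → W = ⊥ ∨ W = ⊤

/-- Two matrix representations are isomorphic if they are conjugate by an element of
`GLₙ(ℂ)`. -/
def RepIso {G : Type*} [Group G] {n : ℕ} (ρ₁ ρ₂ : G →* GL (Fin n) ℂ) : Prop :=
  ∃ T : GL (Fin n) ℂ, ∀ g : G, T * ρ₁ g * T⁻¹ = ρ₂ g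

/-- Two matrix representations are twist-equivalent if there is a one-dimensional character
`χ : G →* ℂˣ` such that `ρ₁` is isomorphic to `g ↦ χ(g) ρ₂(g)`. -/
def TwistEquiv {G : Type*} [Group G] {n : ℕ} (ρ₁ ρ₂ : G →* GL (Fin n) ℂ) : Prop :=
  ∃ χ : G →* ℂˣ, ∃ T : GL (Fin n) ℂ, ∀ g : G,
    (ρ₁ g : Matrix (Fin n) (Fin n) ℂ)
      = (χ g : ℂ) • ((T * ρ₂ g * T⁻¹ : GL (Fin n) ℂ) : Matrix (Fin n) (Fin n) ℂ)

/-- `r̃ₙ(G)`: the number of twist-equivalence classes of `n`-dimensional irreducible complex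
representations of `G`. -/
noncomputable def twistRepCount (G : Type*) [Group G] (n : ℕ) : ℕ :=
  Nat.card (Quot fun ρ₁ ρ₂ : {ρ : G →* GL (Fin n) ℂ // RepIsIrreducible ρ} =>
    TwistEquiv ρ₁.1 ρ₂.1)

/-!
Linear characters of `Heisenberg R` are trivial on its centre, so the central character `ψ` of an
irreducible representation is a twist invariant. It is a complete one. Let `I` be the largest ideal
on which `ψ` is trivial. After a twist, the subgroups `{(x, 0, 0)}` and `{(0, y, 0)}` both have
nonzero fixed vectors; matrices with entries in `I` become central modulo `ker ψ`, hence act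
trivially. So the representation factors through `Heisenberg (R ⧸ I)`, on which `ψ` is primitive,
and the Stone–von Neumann argument identifies it with the Schrödinger representation on functions
on `R ⧸ I`. Hence the twist classes of dimension `n` correspond to the additive characters `ψ` with
`|R ⧸ I| = n`.

Those with given `I` are the primitive characters of `R ⧸ I`. If `R` is a Dedekind domain and
`R ⧸ I` is finite, a primitive character exists: by the Chinese remainder theorem one may take `I`
to be a prime power, and then any character nontrivial on the smallest nonzero ideal of `R ⧸ I` is
primitive. The others are its multiplicative shifts by the units of `R ⧸ I`.
-/

section AdditiveCharacters

variable {R S S' k : Type*} [CommRing R] [CommRing S] [CommRing S'] [CommMonoid k]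

theorem isPrimitive_iff_forall_eq_zero {φ : AddChar S k} :
    φ.IsPrimitive ↔ ∀ a, (∀ b, φ (a * b) = 1) → a = 0 :=
  forall_congr' fun a ↦ by
    rw [← not_imp_not, not_not, Ne, not_not, DFunLike.ext_iff]
    simp only [AddChar.mulShift_apply, AddChar.one_apply]

/-- The radical of an additive character `ψ` of `R`: the largest ideal on which `ψ` is trivial.
Equivalently, it is the radical of the bi-additive pairing `(x, y) ↦ ψ (x * y)`. -/
def addCharRadical (ψ : AddChar R k) : Ideal R where
  carrier := {x | ∀ y, ψ (x * y) = 1}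
  add_mem' ha hb y := by rw [add_mul, AddChar.map_add_eq_mul, ha y, hb y, one_mul]
  zero_mem' y := by rw [zero_mul, AddChar.map_zero_eq_one]
  smul_mem' c x hx y := by rw [smul_eq_mul, mul_comm c, mul_assoc, hx]

theorem mem_addCharRadical {ψ : AddChar R k} {x : R} :
    x ∈ addCharRadical ψ ↔ ∀ y, ψ (x * y) = 1 := Iff.rfl

theorem eq_one_of_mem_addCharRadical {ψ : AddChar R k} {x : R}
    (hx : x ∈ addCharRadical ψ) : ψ x = 1 := by
  simpa using hx 1

/-- The pullback to `R` of an additive character of the quotient `R ⧸ I`. -/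
def addCharInflate (I : Ideal R) (φ : AddChar (R ⧸ I) k) : AddChar R k :=
  φ.compAddMonoidHom (Ideal.Quotient.mk I : R →+ R ⧸ I)

@[simp]
theorem addCharInflate_apply (I : Ideal R) (φ : AddChar (R ⧸ I) k) (x : R) :
    addCharInflate I φ x = φ (Ideal.Quotient.mk I x) := rfl

theorem addCharInflate_injective (I : Ideal R) :
    Function.Injective (addCharInflate I : AddChar (R ⧸ I) k → AddChar R k) := fun φ φ' h ↦ by
  ext s
  obtain ⟨x, rfl⟩ := Ideal.Quotient.mk_surjective s
  exact DFunLike.congr_fun h x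

theorem addCharRadical_addCharInflate {I : Ideal R} {φ : AddChar (R ⧸ I) k} :
    addCharRadical (addCharInflate I φ) = I ↔ φ.IsPrimitive := by
  have h_le : I ≤ addCharRadical (addCharInflate I φ) := fun x hx y ↦ by
    rw [addCharInflate_apply, map_mul, Ideal.Quotient.eq_zero_iff_mem.mpr hx, zero_mul,
      AddChar.map_zero_eq_one]
  rw [isPrimitive_iff_forall_eq_zero, ← h_le.ge_iff_eq', SetLike.le_def,
    Ideal.Quotient.mk_surjective.forall]
  simp only [Ideal.Quotient.mk_surjective.forall, Ideal.Quotient.eq_zero_iff_mem,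
    mem_addCharRadical, addCharInflate_apply, map_mul]

theorem exists_addCharInflate_eq {I : Ideal R} {ψ : AddChar R k}
    (h : ∀ x ∈ I, ψ x = 1) : ∃ φ : AddChar (R ⧸ I) k, addCharInflate I φ = ψ :=
  ⟨AddChar.toAddMonoidHomEquiv.symm
    (QuotientAddGroup.lift I.toAddSubgroup ψ.toAddMonoidHom h), rfl⟩

theorem exists_isPrimitive_addCharInflate_eq (ψ : AddChar R k) :
    ∃ φ : AddChar (R ⧸ addCharRadical ψ) k,
      φ.IsPrimitive ∧ addCharInflate (addCharRadical ψ) φ = ψ := by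
  obtain ⟨φ, hφ⟩ := exists_addCharInflate_eq fun _ ↦ eq_one_of_mem_addCharRadical (ψ := ψ)
  exact ⟨φ, addCharRadical_addCharInflate.mp (by rw [hφ]), hφ⟩

/-- Additive characters of `R` with radical `I` are the inflations of the primitive additive
characters of `R ⧸ I`. -/
noncomputable def primitiveEquivRadicalEq (I : Ideal R) :
    {φ : AddChar (R ⧸ I) k // φ.IsPrimitive} ≃ {ψ : AddChar R k // addCharRadical ψ = I} :=
  Equiv.ofBijective (fun φ ↦ ⟨addCharInflate I φ, addCharRadical_addCharInflate.mpr φ.2⟩)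
    ⟨fun _ _ h ↦ Subtype.ext (addCharInflate_injective I (Subtype.ext_iff.mp h)), by
      rintro ⟨ψ, rfl⟩
      obtain ⟨φ, hφ, h_eq⟩ := exists_isPrimitive_addCharInflate_eq ψ
      exact ⟨⟨φ, hφ⟩, Subtype.ext h_eq⟩⟩

theorem isPrimitive_mulShift_iff_isUnit [Finite S] {φ : AddChar S k}
    (hφ : φ.IsPrimitive) {a : S} : (φ.mulShift a).IsPrimitive ↔ IsUnit a := by
  have h_zero (b : S) : (∀ c, φ (a * (b * c)) = 1) ↔ a * b = 0 := by
    refine ⟨fun h ↦ isPrimitive_iff_forall_eq_zero.mp hφ _ fun c ↦ by rw [mul_assoc, h], ?_⟩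
    intro h c
    rw [← mul_assoc, h, zero_mul, AddChar.map_zero_eq_one]
  simp only [isUnit_iff_mem_nonZeroDivisors_of_finite, mem_nonZeroDivisors_iff_left,
    isPrimitive_iff_forall_eq_zero, AddChar.mulShift_apply, h_zero]

theorem card_isPrimitive_eq_card_units [Finite S] {φ : AddChar S ℂ} (hφ : φ.IsPrimitive) :
    Nat.card {φ' : AddChar S ℂ // φ'.IsPrimitive} = Nat.card Sˣ := by
  have := Fintype.ofFinite S
  have h_bij : Function.Bijective φ.mulShift :=
    (Fintype.bijective_iff_injective_and_card _).mpr
      ⟨AddChar.to_mulShift_inj_of_isPrimitive hφ, AddChar.card_eq.symm⟩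
  calc Nat.card {φ' : AddChar S ℂ // φ'.IsPrimitive}
      = Nat.card {a : S // IsUnit a} :=
        (Nat.card_congr ((Equiv.ofBijective _ h_bij).subtypeEquiv fun _ ↦
          (isPrimitive_mulShift_iff_isUnit hφ).symm)).symm
    _ = Nat.card Sˣ :=
        Nat.card_congr (Equiv.ofInjective ((↑) : Sˣ → S) Units.val_injective).symm

theorem span_mulShift_eq_top {k : Type*} [Field k] [Finite S] {φ : AddChar S k}
    (hφ : φ.IsPrimitive) :
    Submodule.span k (Set.range fun y ↦ (φ.mulShift y : S → k)) = ⊤ := by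
  have := Fintype.ofFinite S
  have h_indep : LinearIndependent k fun y ↦ (φ.mulShift y : S → k) :=
    (linearIndependent_monoidHom (Multiplicative S) k).comp
      (fun y ↦ (φ.mulShift y).toMonoidHom)
      (AddChar.toMonoidHomEquiv.injective.comp (AddChar.to_mulShift_inj_of_isPrimitive hφ))
  exact h_indep.span_eq_top_of_card_eq_finrank' (Module.finrank_fintype_fun_eq_card k).symm

theorem exists_isPrimitive_of_forall_dvd [Finite S] {s : S} (hs : s ≠ 0)
    (h : ∀ a : S, a ≠ 0 → a ∣ s) : ∃ φ : AddChar S ℂ, φ.IsPrimitive := by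
  obtain ⟨φ, hφ⟩ := AddChar.exists_apply_ne_zero.mpr hs
  refine ⟨φ, isPrimitive_iff_forall_eq_zero.mpr fun a ha ↦ ?_⟩
  by_contra ha₀
  obtain ⟨b, rfl⟩ := h a ha₀
  exact hφ (ha b)

theorem isPrimitive_compAddMonoidHom_ringEquiv (e : S ≃+* S') {φ : AddChar S' k}
    (hφ : φ.IsPrimitive) : (φ.compAddMonoidHom (e : S →+ S')).IsPrimitive := by
  rw [isPrimitive_iff_forall_eq_zero] at hφ ⊢
  refine fun a ha ↦ (map_eq_zero_iff e e.injective).mp (hφ _ ?_)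
  exact e.surjective.forall.mpr fun b ↦ by simpa using ha b

theorem exists_isPrimitive_prod {φ : AddChar S k} {φ' : AddChar S' k}
    (hφ : φ.IsPrimitive) (hφ' : φ'.IsPrimitive) : ∃ χ : AddChar (S × S') k, χ.IsPrimitive := by
  rw [isPrimitive_iff_forall_eq_zero] at hφ hφ'
  refine ⟨φ.compAddMonoidHom (AddMonoidHom.fst S S') * φ'.compAddMonoidHom (AddMonoidHom.snd S S'),
    isPrimitive_iff_forall_eq_zero.mpr fun a ha ↦ Prod.ext (hφ _ fun b ↦ ?_) (hφ' _ fun b ↦ ?_)⟩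
  · simpa using ha (b, 0)
  · simpa using ha (0, b)

theorem exists_isPrimitive_quotient_top :
    ∃ φ : AddChar (R ⧸ (⊤ : Ideal R)) ℂ, φ.IsPrimitive :=
  ⟨1, isPrimitive_iff_forall_eq_zero.mpr fun _ _ ↦ Subsingleton.elim _ _⟩

variable [IsDedekindDomain R]

theorem exists_ne_zero_forall_dvd_quotient_prime_pow {P : Ideal R} (hP : Prime P)
    (m : ℕ) : ∃ s : R ⧸ P ^ (m + 1), s ≠ 0 ∧ ∀ a, a ≠ 0 → a ∣ s := by
  obtain ⟨s, hs, hs'⟩ :=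
    Ideal.exists_mem_pow_notMem_pow_succ P hP.ne_zero (Ideal.isPrime_of_prime hP).ne_top m
  refine ⟨Ideal.Quotient.mk _ s, by rwa [Ne, Ideal.Quotient.eq_zero_iff_mem],
    Ideal.Quotient.mk_surjective.forall.mpr fun a ha ↦ ?_⟩
  obtain ⟨j, -, hj⟩ := (dvd_prime_pow hP _).mp
    (Ideal.dvd_iff_le.mpr (le_sup_right : P ^ (m + 1) ≤ Ideal.span {a} ⊔ P ^ (m + 1)))
  rw [associated_iff_eq] at hj
  have hjm : j ≤ m := by
    by_contra! h_lt
    refine ha (Ideal.Quotient.eq_zero_iff_mem.mpr (Ideal.pow_le_pow_right h_lt ?_))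
    exact hj ▸ Ideal.mem_sup_left (Ideal.mem_span_singleton_self a)
  have hs_mem : s ∈ Ideal.span {a} ⊔ P ^ (m + 1) := hj ▸ Ideal.pow_le_pow_right hjm hs
  obtain ⟨_, hb, c, hc, rfl⟩ := Submodule.mem_sup.mp hs_mem
  rw [map_add, Ideal.Quotient.eq_zero_iff_mem.mpr hc, add_zero]
  exact map_dvd _ (Ideal.mem_span_singleton.mp hb)

theorem exists_isPrimitive_quotient_mul {I J : Ideal R} (hIJ : IsRelPrime I J)
    (hI : ∃ φ : AddChar (R ⧸ I) ℂ, φ.IsPrimitive) (hJ : ∃ φ : AddChar (R ⧸ J) ℂ, φ.IsPrimitive) :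
    ∃ φ : AddChar (R ⧸ I * J) ℂ, φ.IsPrimitive := by
  obtain ⟨φ, hφ⟩ := hI
  obtain ⟨φ', hφ'⟩ := hJ
  obtain ⟨χ, hχ⟩ := exists_isPrimitive_prod hφ hφ'
  have h_coprime : IsCoprime I J := by
    rw [Ideal.isCoprime_iff_sup_eq]
    exact Ideal.isUnit_iff.mp
      (hIJ (Ideal.dvd_iff_le.mpr le_sup_left) (Ideal.dvd_iff_le.mpr le_sup_right))
  exact ⟨_, isPrimitive_compAddMonoidHom_ringEquiv
    (Ideal.quotientMulEquivQuotientProd I J h_coprime) hχ⟩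

theorem exists_isPrimitive_quotient (I : Ideal R) [hI : Finite (R ⧸ I)] :
    ∃ φ : AddChar (R ⧸ I) ℂ, φ.IsPrimitive := by
  induction I using UniqueFactorizationMonoid.induction_on_coprime generalizing hI with
  | h0 =>
    have : IsDomain (R ⧸ (0 : Ideal R)) :=
      (Ideal.Quotient.isDomain_iff_prime _).mpr Ideal.isPrime_bot
    refine exists_isPrimitive_of_forall_dvd one_ne_zero fun a ha ↦ isUnit_iff_dvd_one.mp ?_
    exact isUnit_iff_mem_nonZeroDivisors_of_finite.mpr (mem_nonZeroDivisors_of_ne_zero ha)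
  | h1 hJ => exact Ideal.isUnit_iff.mp hJ ▸ exists_isPrimitive_quotient_top
  | hpr m hP =>
    rcases m with _ | m
    · rw [pow_zero, Ideal.one_eq_top]
      exact exists_isPrimitive_quotient_top
    · obtain ⟨s, hs, h_dvd⟩ := exists_ne_zero_forall_dvd_quotient_prime_pow hP m
      exact exists_isPrimitive_of_forall_dvd hs h_dvd
  | @hcp J J' h_coprime hJ hJ' =>
    have h_left : J * J' ≤ J := Ideal.mul_le_left
    have h_right : J * J' ≤ J' := Ideal.mul_le_right
    have := Finite.of_surjective _ (Ideal.Quotient.factor_surjective h_left)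
    have := Finite.of_surjective _ (Ideal.Quotient.factor_surjective h_right)
    exact exists_isPrimitive_quotient_mul h_coprime hJ hJ'

theorem card_addCharRadical_eq (I : Ideal R) [Finite (R ⧸ I)] :
    Nat.card {ψ : AddChar R ℂ // addCharRadical ψ = I} = Nat.card (R ⧸ I)ˣ := by
  obtain ⟨φ, hφ⟩ := exists_isPrimitive_quotient I
  rw [← card_isPrimitive_eq_card_units hφ, Nat.card_congr (primitiveEquivRadicalEq I)]

theorem card_addChar_eq_sum_card_units {n : ℕ} (hn : n ≠ 0)
    [Finite {I : Ideal R // Nat.card (R ⧸ I) = n}] :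
    Nat.card {ψ : AddChar R ℂ // Nat.card (R ⧸ addCharRadical ψ) = n} =
      ∑ᶠ I : {I : Ideal R // Nat.card (R ⧸ I) = n}, Nat.card (R ⧸ (I : Ideal R))ˣ := by
  have := Fintype.ofFinite {I : Ideal R // Nat.card (R ⧸ I) = n}
  have (I : {I : Ideal R // Nat.card (R ⧸ I) = n}) : Finite (R ⧸ (I : Ideal R)) :=
    Nat.finite_of_card_ne_zero (I.2.trans_ne hn)
  have h_fiber (I : {I : Ideal R // Nat.card (R ⧸ I) = n}) :
      Nat.card {ψ : AddChar R ℂ // addCharRadical ψ = I} = Nat.card (R ⧸ (I : Ideal R))ˣ :=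
    card_addCharRadical_eq I.1
  have (I : {I : Ideal R // Nat.card (R ⧸ I) = n}) :
      Finite {ψ : AddChar R ℂ // addCharRadical ψ = I} :=
    Nat.finite_of_card_ne_zero ((h_fiber I).trans_ne Nat.card_pos.ne')
  rw [← Nat.card_congr (Equiv.sigmaSubtypeFiberEquivSubtype addCharRadical
      (q := fun I ↦ Nat.card (R ⧸ I) = n) fun _ ↦ Iff.rfl),
    Nat.card_sigma, finsum_eq_sum_of_fintype]
  exact Finset.sum_congr rfl fun I _ ↦ h_fiber I

end AdditiveCharacters

theorem exists_comp_eq_of_surjective {G H M : Type*} [Group G] [Group H] [Monoid M] {f : G →* H}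
    (hf : Function.Surjective f) (ρ : G →* M) (h : ∀ g, f g = 1 → ρ g = 1) :
    ∃ σ : H →* M, σ.comp f = ρ := by
  let e := QuotientGroup.quotientKerEquivOfSurjective f hf
  refine ⟨(QuotientGroup.lift f.ker ρ h).comp e.symm.toMonoidHom, MonoidHom.ext fun g ↦ ?_⟩
  exact congrArg (QuotientGroup.lift f.ker ρ h) (e.symm_apply_apply (g : G ⧸ f.ker))

section Representations

variable {k G H V W : Type*} [Field k] [AddCommGroup V] [Module k V] [AddCommGroup W] [Module k W]

section Monoid

variable [Monoid G] [Monoid H] {ρ : Representation k G V} {σ : Representation k H W}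

theorem isIrreducible_iff_forall_submodule :
    ρ.IsIrreducible ↔ Nontrivial V ∧
      ∀ U : Submodule k V, (∀ g, ∀ v ∈ U, ρ g v ∈ U) → U = ⊥ ∨ U = ⊤ := by
  have h_inj := Subrepresentation.toSubmodule_injective (ρ := ρ)
  rw [← Submodule.nontrivial_iff k]
  refine ⟨fun h ↦ ⟨⟨⊥, ⊤, h_inj.ne bot_ne_top⟩, fun U hU ↦ ?_⟩, fun ⟨_, h⟩ ↦ ?_⟩
  · exact (h.eq_bot_or_eq_top ⟨U, hU⟩).imp (congrArg Subrepresentation.toSubmodule)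
      (congrArg Subrepresentation.toSubmodule)
  · have : Nontrivial (Subrepresentation ρ) :=
      ⟨⊥, ⊤, ne_of_apply_ne Subrepresentation.toSubmodule bot_ne_top⟩
    exact ⟨fun U ↦ (h U.toSubmodule U.apply_mem_toSubmodule).imp (@h_inj U ⊥) (@h_inj U ⊤)⟩

theorem isIrreducible_of_forall_exists_smul (hρ : ρ.IsIrreducible) (e : V ≃ₗ[k] W)
    (h : ∀ g, ∃ h, ∃ c : k, ∀ v, e (ρ g v) = c • σ h (e v)) : σ.IsIrreducible := by
  rw [isIrreducible_iff_forall_submodule] at hρ ⊢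
  obtain ⟨_, hρ⟩ := hρ
  refine ⟨e.symm.toEquiv.nontrivial, fun U hU ↦ ?_⟩
  have h_comap := hρ (U.comap (e : V →ₗ[k] W)) fun g v hv ↦ by
    obtain ⟨h, c, hc⟩ := h g
    rw [Submodule.mem_comap, LinearEquiv.coe_coe, hc]
    exact U.smul_mem c (hU h _ hv)
  rw [← Submodule.map_comap_eq_of_surjective (f := (e : V →ₗ[k] W)) e.surjective U]
  refine h_comap.imp (fun h ↦ ?_) fun h ↦ ?_
  · rw [h, Submodule.map_bot]
  · rw [h, Submodule.map_top, LinearEquiv.range]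

theorem eq_one_of_isIrreducible_of_commute (hρ : ρ.IsIrreducible) {f : Module.End k V}
    (hf : ∀ g, Commute f (ρ g)) {v : V} (hv : v ≠ 0) (hfv : f v = v) : f = 1 := by
  let T : ρ.IntertwiningMap ρ := ⟨f - 1, fun g ↦ (hf g).sub_left (Commute.one_left _)⟩
  have hTv : T v = 0 := sub_eq_zero.mpr hfv
  rcases Representation.IsIrreducible.injective_or_eq_zero T with h_inj | h_zero
  · exact absurd ((map_eq_zero_iff T h_inj).mp hTv) hv
  · exact sub_eq_zero.mp (congrArg Representation.IntertwiningMap.toLinearMap h_zero)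

theorem exists_eq_smul_one_of_isIrreducible_of_commute [IsAlgClosed k] [FiniteDimensional k V]
    (hρ : ρ.IsIrreducible) {f : Module.End k V} (hf : ∀ g, Commute f (ρ g)) :
    ∃ c : k, f = c • 1 := by
  obtain ⟨c, hc⟩ :=
    (Representation.IsIrreducible.algebraMap_intertwiningMap_bijective_of_isAlgClosed (ρ := ρ)).2
      ⟨f, fun g ↦ hf g⟩
  exact ⟨c, (congrArg Representation.IntertwiningMap.toLinearMap hc).symm⟩

theorem exists_isIrreducible_toRepresentation [FiniteDimensional k V] [Nontrivial V]
    (ρ : Representation k G V) : ∃ U : Subrepresentation ρ, U.toRepresentation.IsIrreducible := by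
  obtain ⟨U, ⟨hU, hU_ne⟩, hU_min⟩ := wellFounded_lt.has_min
    {U : Submodule k V | (∀ g, ∀ v ∈ U, ρ g v ∈ U) ∧ U ≠ ⊥} ⟨⊤, fun _ _ _ ↦ trivial, top_ne_bot⟩
  refine ⟨⟨U, hU⟩, isIrreducible_iff_forall_submodule.mpr
    ⟨Submodule.nontrivial_iff_ne_bot.mpr hU_ne, fun X hX ↦ or_iff_not_imp_left.mpr fun hX_ne ↦ ?_⟩⟩
  have h_injective := Submodule.map_injective_of_injective U.injective_subtype
  have h_not_lt := hU_min (X.map U.subtype) ⟨?_, fun h ↦ hX_ne (h_injective (by simpa using h))⟩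
  · apply h_injective
    rw [Submodule.map_subtype_top]
    exact (Submodule.map_subtype_le U X).eq_of_not_lt h_not_lt
  · rintro g _ ⟨v, hv, rfl⟩
    exact ⟨_, hX g v hv, rfl⟩

end Monoid

theorem exists_common_eigenvector [IsAlgClosed k] [FiniteDimensional k V] [Nontrivial V]
    {A : Type*} [CommMonoid A] (ρ : Representation k A V) :
    ∃ χ : A →* k, ∃ v ≠ 0, ∀ a, ρ a v = χ a • v := by
  obtain ⟨U, hU⟩ := exists_isIrreducible_toRepresentation ρ
  choose χ hχ using fun a ↦ exists_eq_smul_one_of_isIrreducible_of_commute hU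
    fun b ↦ (Commute.all a b).map U.toRepresentation
  have := (isIrreducible_iff_forall_submodule.mp hU).1
  obtain ⟨v, hv⟩ := exists_ne (0 : U.toSubmodule)
  have h_apply (a : A) : U.toRepresentation a v = χ a • v := LinearMap.congr_fun (hχ a) v
  refine ⟨⟨⟨χ, smul_left_injective k hv ?_⟩, fun a b ↦ smul_left_injective k hv ?_⟩,
    v, Subtype.coe_injective.ne hv, fun a ↦ congrArg Subtype.val (h_apply a)⟩
  · simp only [← h_apply, map_one, Module.End.one_apply, one_smul]
  · simp only [← h_apply, map_mul, Module.End.mul_apply]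
    rw [h_apply b, map_smul, h_apply, smul_smul, mul_comm]

theorem exists_addChar_eigenvector [IsAlgClosed k] [FiniteDimensional k V] [Nontrivial V]
    {A : Type*} [AddCommMonoid A] (ρ : Representation k (Multiplicative A) V) :
    ∃ α : AddChar A k, ∃ v ≠ 0, ∀ a, ρ (.ofAdd a) v = α a • v := by
  obtain ⟨χ, v, hv, h⟩ := exists_common_eigenvector ρ
  exact ⟨AddChar.toMonoidHomEquiv.symm χ, v, hv, fun a ↦ h (.ofAdd a)⟩

theorem isIrreducible_comp_iff_of_surjective [Monoid G] [Monoid H] {f : G →* H}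
    (hf : Function.Surjective f) {σ : Representation k H V} :
    Representation.IsIrreducible (σ.comp f) ↔ σ.IsIrreducible := by
  have h_comp (g : G) (v : V) : σ.comp f g v = (1 : k) • σ (f g) v := (one_smul k _).symm
  refine ⟨fun h ↦ isIrreducible_of_forall_exists_smul h (.refl k V) fun g ↦ ⟨f g, 1, h_comp g⟩,
    fun h ↦ isIrreducible_of_forall_exists_smul h (.refl k V) (hf.forall.mpr fun g ↦ ⟨g, 1, ?_⟩)⟩
  exact fun v ↦ (one_smul k (σ (f g) v)).symm

theorem linearIndependent_of_forall_apply_eq_smul {A ι : Type*} [CommMonoid A]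
    (ρ : Representation k A V) {χ : ι → A → k} (hχ : Function.Injective χ) {v : ι → V}
    (hv : ∀ i, v i ≠ 0) (h : ∀ i a, ρ a (v i) = χ i a • v i) : LinearIndependent k v := by
  have h_indep := Module.End.independent_iInf_maxGenEigenspace_of_forall_mapsTo ρ fun a b c ↦
    Module.End.mapsTo_maxGenEigenspace_of_comm ((Commute.all b a).map ρ) c
  refine (h_indep.comp hχ).linearIndependent _ (fun i ↦ ?_) hv
  exact (Submodule.mem_iInf _).mpr fun a ↦
    Module.End.genEigenspace_le_maximal (ρ a) (χ i a) 1 (Module.End.mem_eigenspace_iff.mpr (h i a))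

section Twist

variable [Group G]

/-- The twist `g ↦ χ g • ρ g` of a representation `ρ` by a linear character `χ`. -/
def twist (χ : G →* kˣ) (ρ : Representation k G V) : Representation k G V where
  toFun g := (χ g : k) • ρ g
  map_one' := by rw [map_one, map_one, Units.val_one, one_smul]
  map_mul' g h := by rw [map_mul, map_mul, Units.val_mul, smul_mul_smul_comm]

@[simp]
theorem twist_apply (χ : G →* kˣ) (ρ : Representation k G V) (g : G) :
    twist χ ρ g = (χ g : k) • ρ g := rfl

/-- Two representations, possibly on different spaces, are twist-equivalent if one is isomorphic to
a twist of the other by a linear character. -/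
def IsTwistEquiv (ρ : Representation k G V) (σ : Representation k G W) : Prop :=
  ∃ χ : G →* kˣ, Nonempty (ρ.Equiv (twist χ σ))

theorem isTwistEquiv_iff {ρ : Representation k G V} {σ : Representation k G W} :
    IsTwistEquiv ρ σ ↔
      ∃ χ : G →* kˣ, ∃ e : V ≃ₗ[k] W, ∀ g v, e (ρ g v) = (χ g : k) • σ g (e v) :=
  exists_congr fun _ ↦ ⟨fun ⟨e⟩ ↦ ⟨e.toLinearEquiv, e.toIntertwiningMap.isIntertwining _ _⟩,
    fun ⟨e, he⟩ ↦ ⟨.mk e fun g ↦ LinearMap.ext (he g)⟩⟩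

theorem IsTwistEquiv.symm {ρ : Representation k G V} {σ : Representation k G W}
    (h : IsTwistEquiv ρ σ) : IsTwistEquiv σ ρ := by
  rw [isTwistEquiv_iff] at h ⊢
  obtain ⟨χ, e, he⟩ := h
  refine ⟨χ⁻¹, e.symm, fun g w ↦ ?_⟩
  rw [LinearEquiv.symm_apply_eq, map_smul, he, e.apply_symm_apply, smul_smul, MonoidHom.inv_apply,
    Units.inv_mul, one_smul]

theorem IsTwistEquiv.trans {X : Type*} [AddCommGroup X] [Module k X] {ρ : Representation k G V}
    {σ : Representation k G W} {τ : Representation k G X} (h : IsTwistEquiv ρ σ)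
    (h' : IsTwistEquiv σ τ) : IsTwistEquiv ρ τ := by
  rw [isTwistEquiv_iff] at h h' ⊢
  obtain ⟨χ, e, he⟩ := h
  obtain ⟨χ', e', he'⟩ := h'
  refine ⟨χ * χ', e.trans e', fun g v ↦ ?_⟩
  rw [LinearEquiv.trans_apply, he, map_smul, he', smul_smul, MonoidHom.mul_apply, Units.val_mul,
    LinearEquiv.trans_apply]

theorem IsTwistEquiv.isIrreducible {ρ : Representation k G V} {σ : Representation k G W}
    (h : IsTwistEquiv ρ σ) (hρ : ρ.IsIrreducible) : σ.IsIrreducible := by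
  obtain ⟨χ, e, he⟩ := isTwistEquiv_iff.mp h
  exact isIrreducible_of_forall_exists_smul hρ e fun g ↦ ⟨g, χ g, he g⟩

theorem isTwistEquiv_twist (χ : G →* kˣ) (ρ : Representation k G V) :
    IsTwistEquiv (twist χ ρ) ρ :=
  ⟨χ, ⟨.refl _⟩⟩

theorem IsTwistEquiv.of_equiv {ρ : Representation k G V} {σ : Representation k G W}
    (e : ρ.Equiv σ) : IsTwistEquiv ρ σ :=
  isTwistEquiv_iff.mpr ⟨1, e.toLinearEquiv, fun g v ↦ by
    rw [MonoidHom.one_apply, Units.val_one, one_smul]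
    exact Representation.IntertwiningMap.isIntertwining _ _ e.toIntertwiningMap g v⟩

theorem IsTwistEquiv.comp [Group H] {ρ : Representation k H V} {σ : Representation k H W}
    (h : IsTwistEquiv ρ σ) (f : G →* H) : IsTwistEquiv (ρ.comp f) (σ.comp f) := by
  obtain ⟨χ, e, he⟩ := isTwistEquiv_iff.mp h
  exact isTwistEquiv_iff.mpr ⟨χ.comp f, e, fun g ↦ he (f g)⟩

theorem IsTwistEquiv.finrank_eq {ρ : Representation k G V} {σ : Representation k G W}
    (h : IsTwistEquiv ρ σ) : Module.finrank k V = Module.finrank k W := by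
  obtain ⟨-, e, -⟩ := isTwistEquiv_iff.mp h
  exact e.finrank_eq

end Twist

section Matrix

variable {ι : Type*} [Fintype ι] [DecidableEq ι] [Group G]

/-- The representation on column vectors defined by a matrix representation. -/
def ofGL (ρ : G →* GL ι k) : Representation k G (ι → k) :=
  ((Matrix.toLinAlgEquiv' : Matrix ι ι k ≃ₐ[k] _) : Matrix ι ι k →* _).comp
    ((Units.coeHom (Matrix ι ι k)).comp ρ)

theorem ofGL_apply (ρ : G →* GL ι k) (g : G) (v : ι → k) :
    ofGL ρ g v = (ρ g : Matrix ι ι k).mulVec v := rfl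

/-- The matrix representation describing a representation in a basis. -/
noncomputable def toGL (b : Module.Basis ι k V) (σ : Representation k G V) : G →* GL ι k :=
  MonoidHom.toHomUnits
    (((LinearMap.toMatrixAlgEquiv b : _ ≃ₐ[k] Matrix ι ι k) : _ →* Matrix ι ι k).comp σ)

theorem isTwistEquiv_ofGL_toGL (b : Module.Basis ι k V) (σ : Representation k G V) :
    IsTwistEquiv (ofGL (toGL b σ)) σ :=
  IsTwistEquiv.symm <| isTwistEquiv_iff.mpr ⟨1, b.equivFun, fun g v ↦ by
    rw [MonoidHom.one_apply, Units.val_one, one_smul]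
    exact (LinearMap.toMatrix_mulVec_repr b b (σ g) v).symm⟩

theorem repIsIrreducible_iff {n : ℕ} {ρ : G →* GL (Fin n) ℂ} :
    RepIsIrreducible ρ ↔ (ofGL ρ).IsIrreducible := by
  rw [isIrreducible_iff_forall_submodule, ← Submodule.nontrivial_iff ℂ]
  exact and_congr_left' ⟨fun h ↦ ⟨_, _, h⟩, fun _ ↦ bot_ne_top⟩

theorem twistEquiv_iff_isTwistEquiv {n : ℕ} {ρ₁ ρ₂ : G →* GL (Fin n) ℂ} :
    TwistEquiv ρ₁ ρ₂ ↔ IsTwistEquiv (ofGL ρ₁) (ofGL ρ₂) := by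
  let Φ : GL (Fin n) ℂ ≃* ((Fin n → ℂ) ≃ₗ[ℂ] (Fin n → ℂ)) :=
    Matrix.GeneralLinearGroup.toLin.trans (LinearMap.GeneralLinearGroup.generalLinearEquiv ℂ _)
  have hΦ (T : GL (Fin n) ℂ) (v : Fin n → ℂ) : Φ T v = (T : Matrix _ _ ℂ).mulVec v := rfl
  have h_surj : Function.Surjective fun T ↦ Φ T⁻¹ := Φ.surjective.comp inv_surjective
  rw [isTwistEquiv_iff]
  refine exists_congr fun χ ↦ ?_
  rw [h_surj.exists]
  refine exists_congr fun T ↦ forall_congr' fun g ↦ ?_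
  rw [← Units.mul_right_inj T⁻¹, mul_smul_comm, Units.val_mul, Units.val_mul, mul_assoc,
    Units.inv_mul_cancel_left, ← Matrix.mulVec_injective.eq_iff, funext_iff]
  simp only [hΦ, ofGL_apply, Matrix.mulVec_mulVec, Matrix.smul_mulVec]

end Matrix

end Representations

namespace Heisenberg

variable {R S k V W : Type*} [CommRing R] [CommRing S]

/-- The homomorphism of Heisenberg groups given by applying a ring homomorphism to the entries. -/
def map (f : R →+* S) : Heisenberg R →* Heisenberg S where
  toFun g := ⟨f g.x, f g.y, f g.z⟩
  map_one' := by simp only [one_def, map_zero]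
  map_mul' g h := by simp only [mul_def, map_add, map_mul]

theorem map_surjective {f : R →+* S} (hf : Function.Surjective f) :
    Function.Surjective (map f) := fun ⟨x, y, z⟩ ↦ by
  obtain ⟨x, rfl⟩ := hf x
  obtain ⟨y, rfl⟩ := hf y
  obtain ⟨z, rfl⟩ := hf z
  exact ⟨⟨x, y, z⟩, rfl⟩

/-- The one-parameter subgroup of matrices supported in the entry `x`. -/
def xHom : Multiplicative R →* Heisenberg R where
  toFun a := ⟨a.toAdd, 0, 0⟩
  map_one' := rfl
  map_mul' a b := by simp [mul_def]

/-- The one-parameter subgroup of matrices supported in the entry `y`. -/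
def yHom : Multiplicative R →* Heisenberg R where
  toFun b := ⟨0, b.toAdd, 0⟩
  map_one' := rfl
  map_mul' a b := by simp [mul_def]

theorem yHom_apply (b : Multiplicative R) : yHom b = ⟨0, b.toAdd, 0⟩ := rfl

/-- The centre of the Heisenberg group, parametrised by the entry `z`. -/
def zHom : Multiplicative R →* Heisenberg R where
  toFun c := ⟨0, 0, c.toAdd⟩
  map_one' := rfl
  map_mul' a b := by simp [mul_def]

theorem z_mul_x_mul_y (a b c : R) :
    (⟨0, 0, c - a * b⟩ * (⟨a, 0, 0⟩ * ⟨0, b, 0⟩) : Heisenberg R) = ⟨a, b, c⟩ := by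
  simp [mul_def]

theorem commute_z (c : R) (g : Heisenberg R) : Commute ⟨0, 0, c⟩ g := by
  ext <;> simp [mul_def, add_comm]

theorem x_mul (a : R) (g : Heisenberg R) :
    (⟨a, 0, 0⟩ * g : Heisenberg R) = ⟨0, 0, a * g.y⟩ * (g * ⟨a, 0, 0⟩) := by
  ext <;> simp [mul_def, add_comm]

theorem mul_y (g : Heisenberg R) (b : R) :
    (g * ⟨0, b, 0⟩ : Heisenberg R) = ⟨0, 0, g.x * b⟩ * (⟨0, b, 0⟩ * g) := by
  ext <;> simp [mul_def, add_comm]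

theorem apply_z_eq_one {A : Type*} [CommGroup A] (χ : Heisenberg R →* A) (c : R) :
    χ ⟨0, 0, c⟩ = 1 := by
  have h := congrArg χ (mul_y ⟨c, 0, 0⟩ 1)
  rwa [map_mul, map_mul, map_mul, mul_comm (χ ⟨0, 1, 0⟩), right_eq_mul, mul_one] at h

variable [Field k] [AddCommGroup V] [Module k V] [AddCommGroup W] [Module k W]

/-- The linear character `(x, y, z) ↦ α x * β y` of the Heisenberg group. -/
def charOfPair (α β : AddChar R k) : Heisenberg R →* kˣ :=
  MonoidHom.toHomUnits
    { toFun g := α g.x * β g.y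
      map_one' := by simp [one_def]
      map_mul' g h := by
        simp only [mul_def, AddChar.map_add_eq_mul]
        exact mul_mul_mul_comm _ _ _ _ }

theorem charOfPair_apply (α β : AddChar R k) (g : Heisenberg R) :
    (charOfPair α β g : k) = α g.x * β g.y := rfl

/-- The centre of the Heisenberg group acts through the additive character `ψ`. -/
def HasCentralChar (ρ : Representation k (Heisenberg R) V) (ψ : AddChar R k) : Prop :=
  ∀ c v, ρ ⟨0, 0, c⟩ v = ψ c • v

section HasCentralChar

variable {ρ : Representation k (Heisenberg R) V} {σ : Representation k (Heisenberg R) W}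
  {ψ ψ' : AddChar R k}

theorem exists_hasCentralChar [IsAlgClosed k] [FiniteDimensional k V] (hρ : ρ.IsIrreducible) :
    ∃ ψ, HasCentralChar ρ ψ := by
  have := (isIrreducible_iff_forall_submodule.mp hρ).1
  obtain ⟨ψ, v, hv, h⟩ := exists_addChar_eigenvector (ρ.comp zHom)
  refine ⟨ψ, fun c w ↦ ?_⟩
  obtain ⟨a, ha⟩ := exists_eq_smul_one_of_isIrreducible_of_commute hρ fun g ↦
    (commute_z c g).map ρ
  have hav : a = ψ c := smul_left_injective k hv ((LinearMap.congr_fun ha v).symm.trans (h c))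
  rw [ha, hav, LinearMap.smul_apply, Module.End.one_apply]

theorem HasCentralChar.unique [Nontrivial V] (h : HasCentralChar ρ ψ) (h' : HasCentralChar ρ ψ') :
    ψ = ψ' := by
  obtain ⟨v, hv⟩ := exists_ne (0 : V)
  exact DFunLike.ext _ _ fun c ↦ smul_left_injective k hv ((h c v).symm.trans (h' c v))

theorem HasCentralChar.of_isTwistEquiv (hσ : HasCentralChar σ ψ) (h : IsTwistEquiv ρ σ) :
    HasCentralChar ρ ψ := by
  obtain ⟨χ, e, he⟩ := isTwistEquiv_iff.mp h
  refine fun c v ↦ e.injective ?_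
  rw [he, apply_z_eq_one, Units.val_one, one_smul, hσ, map_smul]

theorem HasCentralChar.comp_map_mk {I : Ideal R} {σ : Representation k (Heisenberg (R ⧸ I)) W}
    {φ : AddChar (R ⧸ I) k} (hσ : HasCentralChar σ φ) :
    HasCentralChar (σ.comp (map (Ideal.Quotient.mk I))) (addCharInflate I φ) := fun c v ↦ by
  rw [addCharInflate_apply, ← hσ, MonoidHom.comp_apply]
  simp only [map, MonoidHom.coe_mk, OneHom.coe_mk, map_zero]

end HasCentralChar

section Schrodinger

/-- The Schrödinger representation of the Heisenberg group over `S` on functions on `S`: the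
entry `x` translates and the entry `y` multiplies by characters. -/
def schrodinger (φ : AddChar S k) : Representation k (Heisenberg S) (S → k) where
  toFun g :=
    { toFun f s := φ (g.z + s * g.y) * f (s + g.x)
      map_add' _ _ := funext fun _ ↦ mul_add _ _ _
      map_smul' _ _ := funext fun _ ↦ mul_left_comm _ _ _ }
  map_one' := LinearMap.ext fun f ↦ funext fun s ↦ by simp [one_def]
  map_mul' g h := LinearMap.ext fun f ↦ funext fun s ↦ by
    simp only [mul_def, LinearMap.coe_mk, AddHom.coe_mk, Module.End.mul_apply, ← mul_assoc,
      ← AddChar.map_add_eq_mul]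
    ring_nf

theorem schrodinger_apply (φ : AddChar S k) (g : Heisenberg S) (f : S → k) (s : S) :
    schrodinger φ g f s = φ (g.z + s * g.y) * f (s + g.x) := rfl

theorem schrodinger_single [DecidableEq S] (φ : AddChar S k) (g : Heisenberg S) (t : S) :
    schrodinger φ g (Pi.single t 1) =
      φ (g.z + (t - g.x) * g.y) • Pi.single (t - g.x) (1 : k) := by
  ext s
  rw [schrodinger_apply, Pi.smul_apply, smul_eq_mul]
  rcases eq_or_ne s (t - g.x) with rfl | hs
  · rw [sub_add_cancel, Pi.single_eq_same, Pi.single_eq_same]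
  · rw [Pi.single_eq_of_ne hs, Pi.single_eq_of_ne fun h ↦ hs (eq_sub_of_add_eq h), mul_zero,
      mul_zero]

theorem hasCentralChar_schrodinger (φ : AddChar S k) : HasCentralChar (schrodinger φ) φ :=
  fun c f ↦ funext fun s ↦ by
    rw [schrodinger_apply, mul_zero, add_zero, add_zero, Pi.smul_apply, smul_eq_mul]

variable {φ : AddChar S k}

-- The matrices supported in the entry `y` act by multiplication by the characters `φ.mulShift y`,
-- which span all functions.
theorem mul_mem_of_forall_schrodinger_mem [Finite S] (hφ : φ.IsPrimitive)
    {U : Submodule k (S → k)} (hU : ∀ g, ∀ f ∈ U, schrodinger φ g f ∈ U) (h : S → k) {f : S → k}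
    (hf : f ∈ U) : h * f ∈ U := by
  have h_span : h ∈ Submodule.span k (Set.range fun y ↦ (φ.mulShift y : S → k)) :=
    span_mulShift_eq_top hφ ▸ Submodule.mem_top
  induction h_span using Submodule.span_induction with
  | mem _ h_range =>
    obtain ⟨y, rfl⟩ := h_range
    convert hU ⟨0, y, 0⟩ f hf using 1
    ext s
    rw [schrodinger_apply, zero_add, add_zero, mul_comm s]
    rfl
  | zero => rw [zero_mul]; exact U.zero_mem
  | add _ _ _ _ h₁ h₂ => rw [add_mul]; exact U.add_mem h₁ h₂
  | smul c _ _ h₁ => rw [smul_mul_assoc]; exact U.smul_mem c h₁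

theorem isIrreducible_schrodinger [Finite S] (hφ : φ.IsPrimitive) :
    (schrodinger φ).IsIrreducible := by
  classical
  refine isIrreducible_iff_forall_submodule.mpr
    ⟨inferInstance, fun U hU ↦ or_iff_not_imp_left.mpr fun hU_ne ↦ ?_⟩
  obtain ⟨f, hf, hf_ne⟩ := U.exists_mem_ne_zero_of_ne_bot hU_ne
  obtain ⟨t, ht⟩ := Function.ne_iff.mp hf_ne
  have h_single : Pi.single t 1 ∈ U := by
    convert mul_mem_of_forall_schrodinger_mem hφ hU (Pi.single t (f t)⁻¹) hf using 1
    rw [← Pi.single_mul_left, inv_mul_cancel₀ ht]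
  rw [← top_le_iff, ← (Pi.basisFun k S).span_eq, Submodule.span_le]
  rintro _ ⟨s, rfl⟩
  rw [SetLike.mem_coe]
  convert hU ⟨t - s, 0, 0⟩ _ h_single using 1
  rw [schrodinger_single, Pi.basisFun_apply, sub_sub_cancel, mul_zero, add_zero,
    AddChar.map_zero_eq_one, one_smul]

end Schrodinger

section StoneVonNeumann

variable {φ : AddChar S k} {σ : Representation k (Heisenberg S) V} {v : V}

theorem apply_apply_x_neg (hσ : HasCentralChar σ φ) (hv : ∀ y, σ ⟨0, y, 0⟩ v = v)
    (g : Heisenberg S) (s : S) :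
    σ g (σ ⟨-s, 0, 0⟩ v) = φ (g.z + (s - g.x) * g.y) • σ ⟨-(s - g.x), 0, 0⟩ v := by
  have h_mul : g * ⟨-s, 0, 0⟩ =
      ⟨0, 0, g.z + (s - g.x) * g.y⟩ * (⟨-(s - g.x), 0, 0⟩ * ⟨0, g.y, 0⟩) := by
    ext <;> simp [mul_def] <;> ring
  rw [← Module.End.mul_apply, ← map_mul, h_mul, map_mul, map_mul, Module.End.mul_apply, hσ,
    Module.End.mul_apply, hv]

theorem linearIndependent_apply_x_neg (hφ : φ.IsPrimitive) (hσ : HasCentralChar σ φ)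
    (hv_ne : v ≠ 0) (hv : ∀ y, σ ⟨0, y, 0⟩ v = v) :
    LinearIndependent k fun s ↦ σ ⟨-s, 0, 0⟩ v := by
  refine linearIndependent_of_forall_apply_eq_smul (σ.comp yHom) (χ := fun s y ↦ φ (s * y.toAdd))
    (fun s t h ↦ AddChar.to_mulShift_inj_of_isPrimitive hφ (DFunLike.ext' h)) (fun s h ↦ ?_)
    fun s y ↦ ?_
  · exact hv_ne ((map_eq_zero_iff _ (σ.apply_bijective _).injective).mp h)
  · refine (apply_apply_x_neg hσ hv (yHom y) s).trans ?_
    simp only [yHom_apply, sub_zero, zero_add]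

theorem nonempty_equiv_schrodinger [Finite S] (hφ : φ.IsPrimitive) (hσ_irr : σ.IsIrreducible)
    (hσ : HasCentralChar σ φ) (hv_ne : v ≠ 0) (hv : ∀ y, σ ⟨0, y, 0⟩ v = v) :
    Nonempty ((schrodinger φ).Equiv σ) := by
  classical
  let T : (schrodinger φ).IntertwiningMap σ :=
    ⟨(Pi.basisFun k S).constr k fun s ↦ σ ⟨-s, 0, 0⟩ v, fun g ↦ (Pi.basisFun k S).ext fun s ↦ by
      rw [LinearMap.comp_apply, LinearMap.comp_apply, Module.Basis.constr_basis,
        Pi.basisFun_apply, schrodinger_single, map_smul, ← Pi.basisFun_apply,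
        Module.Basis.constr_basis, apply_apply_x_neg hσ hv]⟩
  have hT : T (Pi.basisFun k S 0) = v :=
    ((Pi.basisFun k S).constr_basis k _ 0).trans (by rw [neg_zero]; exact hv 0)
  have := isIrreducible_schrodinger hφ
  rcases Representation.IsIrreducible.bijective_or_eq_zero T with h_bij | h_zero
  · exact ⟨T.ofBijective h_bij⟩
  · exact absurd (hT.symm.trans (by rw [h_zero]; rfl)) hv_ne

end StoneVonNeumann

section Reduction

variable {ρ : Representation k (Heisenberg R) V}

theorem exists_isTwistEquiv_fixed [IsAlgClosed k] [FiniteDimensional k V] [Nontrivial V]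
    (ρ : Representation k (Heisenberg R) V) :
    ∃ ρ' : Representation k (Heisenberg R) V, IsTwistEquiv ρ' ρ ∧
      (∃ w ≠ 0, ∀ x, ρ' ⟨x, 0, 0⟩ w = w) ∧ ∃ v ≠ 0, ∀ y, ρ' ⟨0, y, 0⟩ v = v := by
  obtain ⟨α, w, hw, hα⟩ := exists_addChar_eigenvector (ρ.comp xHom)
  obtain ⟨β, v, hv, hβ⟩ := exists_addChar_eigenvector (ρ.comp yHom)
  refine ⟨_, isTwistEquiv_twist (charOfPair α β)⁻¹ ρ, ⟨w, hw, fun x ↦ ?_⟩, v, hv, fun y ↦ ?_⟩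
  all_goals
    rw [twist_apply, MonoidHom.inv_apply, LinearMap.smul_apply, ← Units.smul_def,
      inv_smul_eq_iff, Units.smul_def, charOfPair_apply, AddChar.map_zero_eq_one]
  · rw [mul_one]; exact hα x
  · rw [one_mul]; exact hβ y

-- Modulo elements acting trivially, the matrices `⟨a, 0, 0⟩` and `⟨0, b, 0⟩` with `a, b ∈ I` are
-- central, so they act by scalars, which the fixed vectors force to be `1`.
theorem apply_eq_one_of_mem {ψ : AddChar R k} (hρ : ρ.IsIrreducible) (h_center : HasCentralChar ρ ψ)
    {I : Ideal R} (hψ : ∀ x ∈ I, ψ x = 1) {v w : V} (hw_ne : w ≠ 0) (hw : ∀ x, ρ ⟨x, 0, 0⟩ w = w)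
    (hv_ne : v ≠ 0) (hv : ∀ y, ρ ⟨0, y, 0⟩ v = v) {a b c : R} (ha : a ∈ I) (hb : b ∈ I)
    (hc : c ∈ I) : ρ ⟨a, b, c⟩ = 1 := by
  have h_z {c : R} (hc : c ∈ I) : ρ ⟨0, 0, c⟩ = 1 :=
    LinearMap.ext fun u ↦ by rw [h_center, hψ c hc, one_smul, Module.End.one_apply]
  have h_x : ρ ⟨a, 0, 0⟩ = 1 := eq_one_of_isIrreducible_of_commute hρ (fun g ↦ by
    rw [commute_iff_eq, ← map_mul, x_mul, map_mul, h_z (I.mul_mem_right _ ha), one_mul, map_mul])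
    hw_ne (hw a)
  have h_y : ρ ⟨0, b, 0⟩ = 1 := eq_one_of_isIrreducible_of_commute hρ (fun g ↦ by
    rw [commute_iff_eq, eq_comm, ← map_mul, mul_y, map_mul, h_z (I.mul_mem_left _ hb), one_mul,
      map_mul]) hv_ne (hv b)
  rw [← z_mul_x_mul_y, map_mul, map_mul, h_x, h_y, h_z (I.sub_mem hc (I.mul_mem_left _ hb)),
    one_mul, one_mul]

theorem finite_and_isTwistEquiv_schrodinger [IsAlgClosed k] [FiniteDimensional k V] {I : Ideal R}
    {φ : AddChar (R ⧸ I) k} (hφ : φ.IsPrimitive) (hρ : ρ.IsIrreducible)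
    (h_center : HasCentralChar ρ (addCharInflate I φ)) :
    Finite (R ⧸ I) ∧ IsTwistEquiv ρ ((schrodinger φ).comp (map (Ideal.Quotient.mk I))) := by
  have h_mk : Function.Surjective (Ideal.Quotient.mk I) := Ideal.Quotient.mk_surjective
  have := (isIrreducible_iff_forall_submodule.mp hρ).1
  obtain ⟨ρ', h_twist, ⟨w, hw_ne, hw⟩, v, hv_ne, hv⟩ := exists_isTwistEquiv_fixed ρ
  have hρ' := h_twist.symm.isIrreducible hρ
  have h_center' := h_center.of_isTwistEquiv h_twist
  have h_trivial (x : R) (hx : x ∈ I) : addCharInflate I φ x = 1 := by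
    rw [addCharInflate_apply, Ideal.Quotient.eq_zero_iff_mem.mpr hx, AddChar.map_zero_eq_one]
  obtain ⟨σ, rfl⟩ := exists_comp_eq_of_surjective (map_surjective h_mk) ρ' fun g hg ↦ by
    obtain ⟨hx, hy, hz⟩ := Heisenberg.ext_iff.mp hg
    exact apply_eq_one_of_mem hρ' h_center' h_trivial hw_ne hw hv_ne hv
      (Ideal.Quotient.eq_zero_iff_mem.mp hx) (Ideal.Quotient.eq_zero_iff_mem.mp hy)
      (Ideal.Quotient.eq_zero_iff_mem.mp hz)
  have hσ := (isIrreducible_comp_iff_of_surjective (map_surjective h_mk)).mp hρ'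
  have hσ_center : HasCentralChar σ φ := h_mk.forall.mpr fun c u ↦ by
    simpa [map] using h_center' c u
  have hσ_fixed : ∀ y, σ ⟨0, y, 0⟩ v = v := h_mk.forall.mpr fun y ↦ by simpa [map] using hv y
  have h_finite := (linearIndependent_apply_x_neg hφ hσ_center hv_ne hσ_fixed).finite
  obtain ⟨e⟩ := nonempty_equiv_schrodinger hφ hσ hσ_center hv_ne hσ_fixed
  exact ⟨h_finite, h_twist.symm.trans (IsTwistEquiv.symm ((IsTwistEquiv.of_equiv e).comp _))⟩

end Reduction

section Classification

variable {R k V W : Type*} [CommRing R] [Field k] [AddCommGroup V] [Module k V] [AddCommGroup W]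
  [Module k W] {ρ : Representation k (Heisenberg R) V} {σ : Representation k (Heisenberg R) W}
  {ψ ψ' : AddChar R k}

theorem exists_isIrreducible_hasCentralChar (ψ : AddChar R k) [Finite (R ⧸ addCharRadical ψ)] :
    ∃ σ : Representation k (Heisenberg R) (R ⧸ addCharRadical ψ → k),
      σ.IsIrreducible ∧ HasCentralChar σ ψ := by
  obtain ⟨φ, hφ, h_eq⟩ := exists_isPrimitive_addCharInflate_eq ψ
  refine ⟨(schrodinger φ).comp (map (Ideal.Quotient.mk _)), ?_, ?_⟩
  · exact (isIrreducible_comp_iff_of_surjective (map_surjective Ideal.Quotient.mk_surjective)).mpr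
      (isIrreducible_schrodinger hφ)
  · have h := (hasCentralChar_schrodinger φ).comp_map_mk
    rwa [h_eq] at h

variable [IsAlgClosed k] [FiniteDimensional k V] [FiniteDimensional k W]

theorem finrank_eq_card_quotient_addCharRadical (hρ : ρ.IsIrreducible) (h : HasCentralChar ρ ψ) :
    Module.finrank k V = Nat.card (R ⧸ addCharRadical ψ) := by
  obtain ⟨φ, hφ, h_eq⟩ := exists_isPrimitive_addCharInflate_eq ψ
  obtain ⟨_, h_twist⟩ := finite_and_isTwistEquiv_schrodinger hφ hρ (by rwa [h_eq])
  have := Fintype.ofFinite (R ⧸ addCharRadical ψ)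
  rw [h_twist.finrank_eq, Module.finrank_fintype_fun_eq_card, Nat.card_eq_fintype_card]

theorem isTwistEquiv_iff_eq_of_hasCentralChar (hρ : ρ.IsIrreducible) (hσ : σ.IsIrreducible)
    (h : HasCentralChar ρ ψ) (h' : HasCentralChar σ ψ') : IsTwistEquiv ρ σ ↔ ψ = ψ' := by
  have := (isIrreducible_iff_forall_submodule.mp hρ).1
  refine ⟨fun h_twist ↦ h.unique (h'.of_isTwistEquiv h_twist), ?_⟩
  rintro rfl
  obtain ⟨φ, hφ, h_eq⟩ := exists_isPrimitive_addCharInflate_eq ψ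
  exact (finite_and_isTwistEquiv_schrodinger hφ hρ (by rwa [h_eq])).2.trans
    (finite_and_isTwistEquiv_schrodinger hφ hσ (by rwa [h_eq])).2.symm

end Classification

section Counting

variable {R : Type*} [CommRing R] {n : ℕ}

theorem exists_repIsIrreducible_hasCentralChar (hn : n ≠ 0) {ψ : AddChar R ℂ}
    (hψ : Nat.card (R ⧸ addCharRadical ψ) = n) :
    ∃ ρ : Heisenberg R →* GL (Fin n) ℂ, RepIsIrreducible ρ ∧ HasCentralChar (ofGL ρ) ψ := by
  have : Finite (R ⧸ addCharRadical ψ) := Nat.finite_of_card_ne_zero (hψ.trans_ne hn)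
  obtain ⟨σ, hσ, h_center⟩ := exists_isIrreducible_hasCentralChar ψ
  have h_twist := isTwistEquiv_ofGL_toGL
    ((Pi.basisFun ℂ _).reindex (Finite.equivFinOfCardEq hψ)) σ
  exact ⟨_, repIsIrreducible_iff.mpr (h_twist.symm.isIrreducible hσ),
    h_center.of_isTwistEquiv h_twist⟩

theorem twistRepCount_eq_card_addChar (hn : n ≠ 0) :
    twistRepCount (Heisenberg R) n =
      Nat.card {ψ : AddChar R ℂ // Nat.card (R ⧸ addCharRadical ψ) = n} := by
  have h_irr (ρ : {ρ : Heisenberg R →* GL (Fin n) ℂ // RepIsIrreducible ρ}) :=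
    repIsIrreducible_iff.mp ρ.2
  choose ψ hψ using fun ρ ↦ exists_hasCentralChar (h_irr ρ)
  have h_rel (ρ₁ ρ₂) : TwistEquiv ρ₁.1 ρ₂.1 ↔ ψ ρ₁ = ψ ρ₂ :=
    twistEquiv_iff_isTwistEquiv.trans
      (isTwistEquiv_iff_eq_of_hasCentralChar (h_irr ρ₁) (h_irr ρ₂) (hψ ρ₁) (hψ ρ₂))
  have h_card (ρ) : Nat.card (R ⧸ addCharRadical (ψ ρ)) = n := by
    rw [← finrank_eq_card_quotient_addCharRadical (h_irr ρ) (hψ ρ), Module.finrank_fin_fun]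
  refine Nat.card_congr (Equiv.ofBijective
    (Quot.lift (fun ρ ↦ ⟨ψ ρ, h_card ρ⟩) fun ρ₁ ρ₂ h ↦ Subtype.ext ((h_rel ρ₁ ρ₂).mp h)) ⟨?_, ?_⟩)
  · rintro ⟨ρ₁⟩ ⟨ρ₂⟩ h
    exact Quot.sound ((h_rel ρ₁ ρ₂).mpr (Subtype.ext_iff.mp h))
  · rintro ⟨χ, hχ⟩
    obtain ⟨ρ, hρ, h_center⟩ := exists_repIsIrreducible_hasCentralChar hn hχ
    have := (isIrreducible_iff_forall_submodule.mp (h_irr ⟨ρ, hρ⟩)).1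
    exact ⟨Quot.mk _ ⟨ρ, hρ⟩, Subtype.ext ((hψ ⟨ρ, hρ⟩).unique h_center)⟩

end Counting

end Heisenberg

theorem twist_representation_count_heisenberg_number_ring_general {R : Type*} [CommRing R]
    [IsDedekindDomain R] {n : ℕ} (hn : n ≠ 0) [Finite {I : Ideal R // Nat.card (R ⧸ I) = n}] :
    twistRepCount (Heisenberg R) n =
      ∑ᶠ I : {I : Ideal R // Nat.card (R ⧸ I) = n}, Nat.card (R ⧸ (I : Ideal R))ˣ :=
  (Heisenberg.twistRepCount_eq_card_addChar hn).trans (card_addChar_eq_sum_card_units hn)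

open scoped NumberField in
/-- **Twist-representation zeta functions of Heisenberg groups over number rings**
(Ezzat; Stasinski–Voll): for a number field `K` with ring of integers `𝓞` and `n ≥ 1`,
`r̃ₙ(H(𝓞)) = ∑_{I ⊴ 𝓞, |𝓞:I| = n} |(𝓞/I)ˣ|`; equivalently
`ζ^{~irr}_{H(𝓞)}(s) = ζ_K(s-1)/ζ_K(s)`. -/
theorem twist_representation_count_heisenberg_number_ring
    (K : Type*) [Field K] [NumberField K] (n : ℕ) (hn : 1 ≤ n) :
    twistRepCount (Heisenberg (𝓞 K)) n
      = ∑ᶠ I : {I : Ideal (𝓞 K) // I ≠ ⊥ ∧ Ideal.absNorm I = n}, Nat.card ((𝓞 K ⧸ (I : Ideal (𝓞 K)))ˣ) := by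
  have hn₀ : n ≠ 0 := Nat.one_le_iff_ne_zero.mp hn
  have h_norm (I : Ideal (𝓞 K)) : Nat.card (𝓞 K ⧸ I) = n ↔ I ≠ ⊥ ∧ Ideal.absNorm I = n := by
    rw [Ideal.absNorm_apply, Submodule.cardQuot_apply, iff_and_self]
    exact fun h ↦ mt Ideal.absNorm_eq_zero_iff.mpr (h.trans_ne hn₀)
  have : Finite {I : Ideal (𝓞 K) // Nat.card (𝓞 K ⧸ I) = n} :=
    Ideal.finite_setOfPred_absNorm_eq (S := 𝓞 K) n
  rw [twist_representation_count_heisenberg_number_ring_general hn₀]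
  exact finsum_comp_equiv (Equiv.subtypeEquivRight h_norm)
    (f := fun I ↦ Nat.card (𝓞 K ⧸ (I : Ideal (𝓞 K)))ˣ)
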